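/- Sharp thresholds for monotone graph properties: There exists a universal constant c > 0 with the following property. Let n ≥ 3, let N = n(n−1)/2 and index {0,1}^N by the edge set of the complete graph on n vertices. Let f : {0,1}^N → {0,1} be an increasing, non-constant boolean function that is invariant under the action of all permutations of the n vertices on the edge coordinates (a monotone graph property). Let p ∈ (0,1) satisfy 𝔼_p[f] = 1/2. Then for every ε ∈ (0,1/2) and every δ ≥ log(1/ε)/(c log n): if p − δ ≥ 0 then 𝔼_{p−δ}[f] ≤ ε, and if p + δ ≤ 1 then 𝔼_{p+δ}[f] ≥ 1 − ε. -/

import Mathlib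

open scoped Classical

section BooleanAnalysis

variable {ι : Type*} [Fintype ι] [DecidableEq ι]

/-- The Bernoulli(`p`) product weight of a configuration `ω ∈ {0,1}^ι`:
`∏ i, p^{ω i}(1-p)^{1-ω i}`.  Summing a function against these weights gives its
expectation under the product measure `ℙ_p`. -/
noncomputable def bernoulliWeight (p : ℝ) (ω : ι → Bool) : ℝ :=
  ∏ i : ι, if ω i then p else 1 - p

/-- Expectation `𝔼_p[g]` of `g : {0,1}^ι → ℝ` under the product Bernoulli(`p`) measure. -/
noncomputable def bernoulliExp (p : ℝ) (g : (ι → Bool) → ℝ) : ℝ :=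
  ∑ ω : ι → Bool, bernoulliWeight p ω * g ω

/-- The `{0,1}`-valued (real) indicator of a boolean function. -/
noncomputable def boolInd (f : (ι → Bool) → Bool) (ω : ι → Bool) : ℝ :=
  if f ω then 1 else 0

/-- `f(p) := 𝔼_p[f]` for a boolean function `f`. -/
noncomputable def bernoulliMean (p : ℝ) (f : (ι → Bool) → Bool) : ℝ :=
  bernoulliExp p (boolInd f)

/-- The variance `Var_p(f)` of a boolean function under `ℙ_p`. -/
noncomputable def bernoulliVar (p : ℝ) (f : (ι → Bool) → Bool) : ℝ :=
  bernoulliExp p (fun ω => (boolInd f ω - bernoulliMean p f) ^ 2)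

/-- `Flip_i(ω)`: flip the `i`-th coordinate of `ω`. -/
def flipCoord (i : ι) (ω : ι → Bool) : ι → Bool :=
  Function.update ω i (!ω i)

/-- The influence `Inf_i[f] := 𝔼_p[|f(ω) - f(Flip_i ω)|]` of coordinate `i`, under `ℙ_p`. -/
noncomputable def influence (p : ℝ) (f : (ι → Bool) → Bool) (i : ι) : ℝ :=
  bernoulliExp p (fun ω => |boolInd f ω - boolInd f (flipCoord i ω)|)

/-- A boolean function is increasing if it is monotone w.r.t. the coordinatewise
partial order on `{0,1}^ι` (with `false ≤ true`). -/
def IncreasingBoolFun (f : (ι → Bool) → Bool) : Prop :=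
  ∀ ω ω' : ι → Bool, (∀ i, ω i ≤ ω' i) → f ω ≤ f ω'

end BooleanAnalysis

/-- The edge set of the complete graph on `Fin n`: unordered pairs of distinct vertices.
It has cardinality `N = n(n−1)/2`; graphs on `Fin n` are identified with elements of
`{0,1}^(KEdge n)`. -/
def KEdge (n : ℕ) := {e : Sym2 (Fin n) // ¬ e.IsDiag}

noncomputable instance (n : ℕ) : Fintype (KEdge n) := by
  unfold KEdge; infer_instance

instance (n : ℕ) : DecidableEq (KEdge n) := by
  unfold KEdge; infer_instance

/-- The action of a permutation `σ` of the vertices on the edges of the complete graph. -/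
def permEdge {n : ℕ} (σ : Equiv.Perm (Fin n)) (e : KEdge n) : KEdge n :=
  ⟨Sym2.map σ e.1, fun h => e.2 ((Sym2.isDiag_map σ.injective).mp h)⟩

/-- A boolean function on graphs is a (monotone) graph property if it is invariant under
the action of every permutation of the vertices on the edge coordinates. -/
def IsGraphProperty {n : ℕ} (f : (KEdge n → Bool) → Bool) : Prop :=
  ∀ (σ : Equiv.Perm (Fin n)) (ω : KEdge n → Bool), f (fun e => ω (permEdge σ e)) = f ω

/-!
By the Margulis–Russo formula the derivative of `p ↦ 𝔼_p[f]` is the total influence of `f`, so it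
suffices to bound the total influence below by a multiple of `log N` times the variance of `f`,
where `N` is the number of coordinates: then the log-odds of `𝔼_p[f]` grow at rate at least
`log N / 3`.

The bound on the influences follows Falik and Samorodnitsky. The cube satisfies a logarithmic
Sobolev inequality with a constant independent of `p`, provided that the Dirichlet form is taken to
be `∑ i, 𝔼_p[(D_i g)²]`; it is proved by integrating out the coordinates one at a time, replacing a
function by its conditional root mean square. Applied to the martingale differences of `f`, whose
`L¹` norms are at most the influences, it shows that the total influence is at least
`V log (V / (N v²))`, with `V` the variance of `f` and `v` a bound for all influences. Transitive
symmetry makes all influences equal, so a small total influence would force `v` to be of order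
`V log N / N`, and the logarithm to be of order `log N`.
-/

open Finset Function

section CoordinateOperators

variable {ι : Type*} [DecidableEq ι] {p : ℝ}

/-- The conditional expectation of `g` given all coordinates but `i`, as a function on the whole
cube. -/
noncomputable def coordAvg (p : ℝ) (i : ι) (g : (ι → Bool) → ℝ) (ω : ι → Bool) : ℝ :=
  p * g (update ω i true) + (1 - p) * g (update ω i false)

/-- The discrete derivative of `g` in direction `i`, as a function on the whole cube. -/
def coordDeriv (i : ι) (g : (ι → Bool) → ℝ) (ω : ι → Bool) : ℝ :=
  g (update ω i true) - g (update ω i false)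

/-- The conditional root mean square of `g` given all coordinates but `i`; replacing `g` by it
integrates out the coordinate `i` while preserving `𝔼_p[g ^ 2]`. -/
noncomputable def coordRMS (p : ℝ) (i : ι) (g : (ι → Bool) → ℝ) (ω : ι → Bool) : ℝ :=
  √(coordAvg p i (g ^ 2) ω)

lemma coordAvg_update (p : ℝ) (i : ι) (g : (ι → Bool) → ℝ) (ω : ι → Bool) (b : Bool) :
    coordAvg p i g (update ω i b) = coordAvg p i g ω := by
  simp only [coordAvg, update_idem]

lemma coordDeriv_update (i : ι) (g : (ι → Bool) → ℝ) (ω : ι → Bool) (b : Bool) :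
    coordDeriv i g (update ω i b) = coordDeriv i g ω := by
  simp only [coordDeriv, update_idem]

lemma coordAvg_eq_self {i : ι} {g : (ι → Bool) → ℝ} (hg : ∀ ω b, g (update ω i b) = g ω) :
    coordAvg p i g = g := by
  ext ω
  rw [coordAvg, hg, hg]
  ring

lemma coordDeriv_eq_zero {i : ι} {g : (ι → Bool) → ℝ} (hg : ∀ ω b, g (update ω i b) = g ω) :
    coordDeriv i g = 0 := by
  ext ω
  rw [coordDeriv, hg, hg, sub_self, Pi.zero_apply]

lemma coordAvg_sub (p : ℝ) (i : ι) (g h : (ι → Bool) → ℝ) :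
    coordAvg p i (g - h) = coordAvg p i g - coordAvg p i h := by
  ext ω
  simp only [coordAvg, Pi.sub_apply]
  ring

lemma coordDeriv_sub (i : ι) (g h : (ι → Bool) → ℝ) :
    coordDeriv i (g - h) = coordDeriv i g - coordDeriv i h := by
  ext ω
  simp only [coordDeriv, Pi.sub_apply]
  ring

lemma coordAvg_comm (p : ℝ) (i j : ι) (g : (ι → Bool) → ℝ) :
    coordAvg p i (coordAvg p j g) = coordAvg p j (coordAvg p i g) := by
  obtain rfl | hij := eq_or_ne i j
  · rfl
  · ext ω
    simp only [coordAvg, update_comm hij]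
    ring

lemma coordDeriv_coordAvg_of_ne (p : ℝ) {i j : ι} (hij : i ≠ j) (g : (ι → Bool) → ℝ) :
    coordDeriv i (coordAvg p j g) = coordAvg p j (coordDeriv i g) := by
  ext ω
  simp only [coordAvg, coordDeriv, update_comm hij]
  ring

lemma abs_coordAvg_le (hp : p ∈ Set.Icc (0 : ℝ) 1) (i : ι) (g : (ι → Bool) → ℝ) :
    |coordAvg p i g| ≤ coordAvg p i |g| := fun ω => by
  have hq : 0 ≤ 1 - p := sub_nonneg.2 hp.2
  simp only [Pi.abs_apply, coordAvg]
  refine (abs_add_le _ _).trans_eq ?_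
  rw [abs_mul, abs_mul, abs_of_nonneg hp.1, abs_of_nonneg hq]

lemma abs_sub_coordAvg_le (hp : p ∈ Set.Icc (0 : ℝ) 1) (i : ι) (g : (ι → Bool) → ℝ) :
    |g - coordAvg p i g| ≤ |coordDeriv i g| := fun ω => by
  have h := update_eq_self i ω
  rw [Pi.abs_apply, Pi.abs_apply, Pi.sub_apply]
  obtain ⟨c, hc, hsub⟩ : ∃ c, |c| ≤ 1 ∧ g ω - coordAvg p i g ω = c * coordDeriv i g ω := by
    cases hb : ω i <;> rw [hb] at h
    · refine ⟨-p, by rw [abs_neg, abs_of_nonneg hp.1]; exact hp.2, ?_⟩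
      rw [coordAvg, coordDeriv, h]
      ring
    · refine ⟨1 - p, by rw [abs_of_nonneg] <;> linarith [hp.1, hp.2], ?_⟩
      rw [coordAvg, coordDeriv, h]
      ring
  rw [hsub, abs_mul]
  exact mul_le_of_le_one_left (abs_nonneg _) hc

lemma dependsOn_coordAvg {s : Finset ι} {g : (ι → Bool) → ℝ} (hg : DependsOn g s) (p : ℝ)
    (i : ι) : DependsOn (coordAvg p i g) (s.erase i) := fun ω ω' h => by
  simp only [coordAvg, hg.update i _ h]

lemma coordRMS_sq (hp : p ∈ Set.Icc (0 : ℝ) 1) (i : ι) (g : (ι → Bool) → ℝ) :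
    coordRMS p i g ^ 2 = coordAvg p i (g ^ 2) := by
  ext ω
  have hq : 0 ≤ 1 - p := sub_nonneg.2 hp.2
  exact Real.sq_sqrt (add_nonneg (mul_nonneg hp.1 (sq_nonneg _)) (mul_nonneg hq (sq_nonneg _)))

lemma dependsOn_coordRMS {s : Finset ι} {g : (ι → Bool) → ℝ} (hg : DependsOn g s) (p : ℝ)
    (i : ι) : DependsOn (coordRMS p i g) (s.erase i) := fun ω ω' h => by
  simp only [coordRMS, coordAvg, Pi.pow_apply, hg.update i _ h]

lemma coordDeriv_coordRMS_self (p : ℝ) (i : ι) (g : (ι → Bool) → ℝ) :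
    coordDeriv i (coordRMS p i g) = 0 :=
  coordDeriv_eq_zero fun ω b => by rw [coordRMS, coordRMS, coordAvg_update]

lemma eq_const_of_dependsOn_empty {α β : Type*} {g : (α → Bool) → β} (hg : DependsOn g ∅) :
    g = const _ (g fun _ => false) :=
  funext fun ω => hg.empty ω _

end CoordinateOperators

section Expectation

variable {ι : Type*} [Fintype ι] {p : ℝ}

lemma bernoulliWeight_nonneg (hp : p ∈ Set.Icc (0 : ℝ) 1) (ω : ι → Bool) :
    0 ≤ bernoulliWeight p ω :=
  prod_nonneg fun i _ => by split_ifs <;> linarith [hp.1, hp.2]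

lemma sum_bernoulliWeight [DecidableEq ι] (p : ℝ) : ∑ ω : ι → Bool, bernoulliWeight p ω = 1 := by
  have h := Fintype.prod_sum fun (_ : ι) (b : Bool) => if b then p else 1 - p
  simpa [bernoulliWeight] using h.symm

lemma bernoulliWeight_comp_perm (p : ℝ) (σ : Equiv.Perm ι) (ω : ι → Bool) :
    bernoulliWeight p (ω ∘ σ) = bernoulliWeight p ω :=
  Equiv.prod_comp σ fun i => if ω i then p else 1 - p

variable [DecidableEq ι]

variable {g h : (ι → Bool) → ℝ}

lemma bernoulliExp_sub (p : ℝ) (g h : (ι → Bool) → ℝ) :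
    bernoulliExp p (g - h) = bernoulliExp p g - bernoulliExp p h := by
  simp only [bernoulliExp, Pi.sub_apply, mul_sub, sum_sub_distrib]

lemma bernoulliExp_smul (p c : ℝ) (g : (ι → Bool) → ℝ) :
    bernoulliExp p (c • g) = c * bernoulliExp p g := by
  simp only [bernoulliExp, Pi.smul_apply, smul_eq_mul, mul_sum, mul_left_comm]

lemma bernoulliExp_const (p c : ℝ) : bernoulliExp p (const (ι → Bool) c) = c := by
  simp only [bernoulliExp, const_apply, ← sum_mul, sum_bernoulliWeight, one_mul]

lemma bernoulliExp_mono (hp : p ∈ Set.Icc (0 : ℝ) 1) (hgh : g ≤ h) :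
    bernoulliExp p g ≤ bernoulliExp p h :=
  sum_le_sum fun ω _ => mul_le_mul_of_nonneg_left (hgh ω) (bernoulliWeight_nonneg hp ω)

lemma bernoulliExp_nonneg (hp : p ∈ Set.Icc (0 : ℝ) 1) (hg : 0 ≤ g) : 0 ≤ bernoulliExp p g :=
  sum_nonneg fun ω _ => mul_nonneg (bernoulliWeight_nonneg hp ω) (hg ω)

lemma bernoulliExp_comp_perm (p : ℝ) (σ : Equiv.Perm ι) (g : (ι → Bool) → ℝ) :
    bernoulliExp p (fun ω => g (ω ∘ σ)) = bernoulliExp p g := by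
  have h := Equiv.sum_comp (σ.symm.arrowCongr (Equiv.refl Bool)) fun ω =>
    bernoulliWeight p ω * g ω
  refine Eq.trans (sum_congr rfl fun ω _ => ?_) h
  rw [← bernoulliWeight_comp_perm p σ ω]
  rfl

lemma bernoulliMean_mem_Icc (hp : p ∈ Set.Icc (0 : ℝ) 1) (f : (ι → Bool) → Bool) :
    bernoulliMean p f ∈ Set.Icc (0 : ℝ) 1 := by
  constructor
  · exact bernoulliExp_nonneg hp fun ω => by unfold boolInd; split_ifs <;> simp
  · refine (bernoulliExp_mono hp fun ω => ?_).trans_eq (bernoulliExp_const (ι := ι) p 1)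
    unfold boolInd; split_ifs <;> simp

/-- The Bernoulli weight of the coordinates of `ω` other than `i`. -/
noncomputable def bernoulliWeightErase (p : ℝ) (i : ι) (ω : ι → Bool) : ℝ :=
  ∏ j ∈ univ.erase i, if ω j then p else 1 - p

lemma bernoulliWeightErase_update (p : ℝ) (i : ι) (ω : ι → Bool) (b : Bool) :
    bernoulliWeightErase p i (update ω i b) = bernoulliWeightErase p i ω :=
  prod_congr rfl fun j hj => by rw [update_of_ne (ne_of_mem_erase hj)]

lemma bernoulliWeight_update (p : ℝ) (i : ι) (ω : ι → Bool) (b : Bool) :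
    bernoulliWeight p (update ω i b) = (if b then p else 1 - p) * bernoulliWeightErase p i ω := by
  rw [← bernoulliWeightErase_update p i ω b, bernoulliWeight, bernoulliWeightErase,
    ← mul_prod_erase univ _ (mem_univ i), update_self]

lemma sum_update_true_add_update_false (i : ι) (F : (ι → Bool) → ℝ) :
    ∑ ω, (F (update ω i true) + F (update ω i false)) = 2 * ∑ ω, F ω := by
  have flip_involutive : Involutive (flipCoord (ι := ι) i) := fun ω => by simp [flipCoord]
  have add_flip (ω : ι → Bool) :
      F (update ω i true) + F (update ω i false) = F ω + F (flipCoord i ω) := by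
    have h := update_eq_self i ω
    cases hb : ω i <;> rw [hb] at h <;> simp [flipCoord, hb, h, add_comm]
  have sum_flip : ∑ ω, F (flipCoord i ω) = ∑ ω, F ω :=
    Equiv.sum_comp flip_involutive.toPerm F
  rw [sum_congr rfl fun ω _ => add_flip ω, sum_add_distrib, sum_flip, two_mul]

lemma sum_bernoulliWeightErase_mul_coordAvg (p : ℝ) (i : ι) (g : (ι → Bool) → ℝ) :
    ∑ ω, bernoulliWeightErase p i ω * coordAvg p i g ω = 2 * bernoulliExp p g := by
  rw [bernoulliExp, ← sum_update_true_add_update_false i]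
  refine sum_congr rfl fun ω _ => ?_
  rw [bernoulliWeight_update, bernoulliWeight_update, coordAvg]
  simp only [if_true, Bool.false_eq_true, if_false]
  ring

lemma bernoulliExp_coordAvg (p : ℝ) (i : ι) (g : (ι → Bool) → ℝ) :
    bernoulliExp p (coordAvg p i g) = bernoulliExp p g := by
  have h := sum_bernoulliWeightErase_mul_coordAvg p i (coordAvg p i g)
  rw [coordAvg_eq_self (coordAvg_update p i g), sum_bernoulliWeightErase_mul_coordAvg] at h
  linarith

lemma bernoulliExp_sq_sub_coordAvg (p : ℝ) (i : ι) (g : (ι → Bool) → ℝ) :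
    bernoulliExp p ((g - coordAvg p i g) ^ 2)
      = bernoulliExp p (g ^ 2) - bernoulliExp p (coordAvg p i g ^ 2) := by
  rw [← bernoulliExp_coordAvg p i ((g - coordAvg p i g) ^ 2), ← bernoulliExp_coordAvg p i (g ^ 2),
    ← bernoulliExp_sub]
  congr 1
  ext ω
  have havg b := coordAvg_update p i g ω b
  simp only [coordAvg, Pi.pow_apply, Pi.sub_apply] at havg ⊢
  rw [havg, havg]
  ring

lemma bernoulliExp_abs_sub_coordAvg_coordAvg_le (hp : p ∈ Set.Icc (0 : ℝ) 1) (i j : ι)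
    (g : (ι → Bool) → ℝ) :
    bernoulliExp p |coordAvg p j g - coordAvg p i (coordAvg p j g)|
      ≤ bernoulliExp p |g - coordAvg p i g| := by
  rw [coordAvg_comm, ← coordAvg_sub]
  exact (bernoulliExp_mono hp (abs_coordAvg_le hp j _)).trans_eq (bernoulliExp_coordAvg p j _)

lemma hasDerivAt_bernoulliWeight (ω : ι → Bool) (p : ℝ) :
    HasDerivAt (fun q => bernoulliWeight q ω)
      (∑ i, bernoulliWeightErase p i ω * if ω i then 1 else -1) p := by
  refine HasDerivAt.fun_finsetProd fun i _ => ?_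
  split_ifs
  · exact hasDerivAt_id' p
  · exact (hasDerivAt_id' p).const_sub 1

lemma sum_bernoulliWeightErase_mul_sign (p : ℝ) (i : ι) (g : (ι → Bool) → ℝ) :
    ∑ ω, (bernoulliWeightErase p i ω * if ω i then 1 else -1) * g ω
      = bernoulliExp p (coordDeriv i g) := by
  have h := sum_bernoulliWeightErase_mul_coordAvg p i (coordDeriv i g)
  rw [coordAvg_eq_self (coordDeriv_update i g)] at h
  refine mul_left_cancel₀ two_ne_zero ?_
  rw [← h, ← sum_update_true_add_update_false i]
  refine sum_congr rfl fun ω _ => ?_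
  simp only [bernoulliWeightErase_update, update_self, coordDeriv, if_true, Bool.false_eq_true,
    if_false]
  ring

theorem hasDerivAt_bernoulliExp (g : (ι → Bool) → ℝ) (p : ℝ) :
    HasDerivAt (fun q => bernoulliExp q g) (∑ i, bernoulliExp p (coordDeriv i g)) p := by
  have h : HasDerivAt (fun q => bernoulliExp q g)
      (∑ ω, (∑ i, bernoulliWeightErase p i ω * if ω i then 1 else -1) * g ω) p :=
    HasDerivAt.fun_sum fun ω _ => (hasDerivAt_bernoulliWeight ω p).mul_const (g ω)
  simp only [sum_mul] at h
  rw [sum_comm] at h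
  simpa only [sum_bernoulliWeightErase_mul_sign] using h

end Expectation

section ScalarInequalities

variable {p : ℝ}

lemma mul_log_div_le_sub {x t : ℝ} (hx : 0 ≤ x) (ht : 0 < t) :
    x * Real.log (t / x) ≤ t - x := by
  obtain rfl | hx := hx.eq_or_lt
  · simpa using ht.le
  · calc x * Real.log (t / x) ≤ x * (t / x - 1) :=
          mul_le_mul_of_nonneg_left (Real.log_le_sub_one_of_pos (div_pos ht hx)) hx.le
      _ = t - x := by field_simp

lemma mul_log_le_mul_log_add {x m : ℝ} (hx : 0 ≤ x) (hm : 0 < m) :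
    x * Real.log x ≤ x * Real.log m + x * (x / m - 1) := by
  obtain rfl | hx := hx.eq_or_lt
  · simp
  · have h := Real.log_le_sub_one_of_pos (div_pos hx hm)
    rw [Real.log_div hx.ne' hm.ne'] at h
    rw [← mul_add]
    exact mul_le_mul_of_nonneg_left (by linarith) hx.le

lemma sq_mul_log_add_sub_le_sq_mul_log_sq {τ : ℝ} (hτ : 0 < τ) (x : ℝ) :
    (2 * Real.log τ + 2) * x ^ 2 - 2 * τ * |x| ≤ x ^ 2 * Real.log (x ^ 2) := by
  obtain rfl | hx := eq_or_ne x 0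
  · simp
  · have h := mul_le_mul_of_nonneg_left (mul_log_div_le_sub (abs_nonneg x) hτ) (abs_nonneg x)
    rw [Real.log_div hτ.ne' (abs_ne_zero.2 hx)] at h
    rw [← sq_abs, Real.log_pow]
    push_cast
    linarith

lemma two_point_log_sobolev (hp : p ∈ Set.Icc (0 : ℝ) 1) (a b : ℝ) :
    p * (a ^ 2 * Real.log (a ^ 2)) + (1 - p) * (b ^ 2 * Real.log (b ^ 2))
      - (p * a ^ 2 + (1 - p) * b ^ 2) * Real.log (p * a ^ 2 + (1 - p) * b ^ 2)
      ≤ (a - b) ^ 2 := by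
  have hq : 0 ≤ 1 - p := sub_nonneg.2 hp.2
  have ha : 0 ≤ p * a ^ 2 := mul_nonneg hp.1 (sq_nonneg a)
  have hb : 0 ≤ (1 - p) * b ^ 2 := mul_nonneg hq (sq_nonneg b)
  set m := p * a ^ 2 + (1 - p) * b ^ 2 with hm
  have hm_nonneg : 0 ≤ m := add_nonneg ha hb
  obtain hm0 | hm0 := hm_nonneg.eq_or_lt
  · have ha0 : p * a ^ 2 = 0 := by linarith
    have hb0 : (1 - p) * b ^ 2 = 0 := by linarith
    rw [← mul_assoc, ← mul_assoc, ha0, hb0, hm, ha0, hb0]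
    simpa using sq_nonneg (a - b)
  · have entropy_le_chi_square :
        p * (a ^ 2 * Real.log (a ^ 2)) + (1 - p) * (b ^ 2 * Real.log (b ^ 2)) - m * Real.log m
          ≤ p * (1 - p) * (a + b) ^ 2 * (a - b) ^ 2 / m := by
      have chi_square_eq :
          p * (a ^ 2 * (a ^ 2 / m - 1)) + (1 - p) * (b ^ 2 * (b ^ 2 / m - 1))
            = p * (1 - p) * (a + b) ^ 2 * (a - b) ^ 2 / m := by
        field_simp
        rw [hm]
        ring
      have ha' := mul_le_mul_of_nonneg_left (mul_log_le_mul_log_add (sq_nonneg a) hm0) hp.1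
      have hb' := mul_le_mul_of_nonneg_left (mul_log_le_mul_log_add (sq_nonneg b) hm0) hq
      linarith
    have hle : p * (1 - p) * (a + b) ^ 2 ≤ m := by
      nlinarith [sq_nonneg (p * a - (1 - p) * b)]
    refine entropy_le_chi_square.trans ((div_le_iff₀ hm0).2 ?_)
    rw [mul_comm ((a - b) ^ 2)]
    exact mul_le_mul_of_nonneg_right hle (sq_nonneg _)

lemma sq_sqrt_sub_sqrt_le (hp : p ∈ Set.Icc (0 : ℝ) 1) (x y z w : ℝ) :
    (√(p * x ^ 2 + (1 - p) * y ^ 2) - √(p * z ^ 2 + (1 - p) * w ^ 2)) ^ 2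
      ≤ p * (x - z) ^ 2 + (1 - p) * (y - w) ^ 2 := by
  have hp0 : 0 ≤ p := hp.1
  have hq : 0 ≤ 1 - p := sub_nonneg.2 hp.2
  have hxy : 0 ≤ p * x ^ 2 + (1 - p) * y ^ 2 := by positivity
  have hzw : 0 ≤ p * z ^ 2 + (1 - p) * w ^ 2 := by positivity
  have cauchy_schwarz : p * x * z + (1 - p) * y * w
      ≤ √(p * x ^ 2 + (1 - p) * y ^ 2) * √(p * z ^ 2 + (1 - p) * w ^ 2) := by
    rw [← Real.sqrt_mul hxy]
    apply Real.le_sqrt_of_sq_le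
    have : 0 ≤ p * (1 - p) * (x * w - y * z) ^ 2 := by positivity
    linarith
  rw [sub_sq, Real.sq_sqrt hxy, Real.sq_sqrt hzw]
  linarith

end ScalarInequalities

section LogSobolev

variable {ι : Type*} [Fintype ι] [DecidableEq ι] {p : ℝ}

/-- The entropy `𝔼_p[h log h] - 𝔼_p[h] log 𝔼_p[h]` of a nonnegative function `h` on the cube,
with `0 log 0 = 0`. -/
noncomputable def bernoulliEntropy (p : ℝ) (h : (ι → Bool) → ℝ) : ℝ :=
  bernoulliExp p (fun ω => h ω * Real.log (h ω)) - bernoulliExp p h * Real.log (bernoulliExp p h)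

/-- The Dirichlet form of the cube, without the usual factor `p (1 - p)`: this normalization makes
the constant in the logarithmic Sobolev inequality independent of `p`. -/
noncomputable def dirichletForm (p : ℝ) (g : (ι → Bool) → ℝ) : ℝ :=
  ∑ i, bernoulliExp p (coordDeriv i g ^ 2)

lemma bernoulliEntropy_nonneg (hp : p ∈ Set.Icc (0 : ℝ) 1) {h : (ι → Bool) → ℝ} (hh : 0 ≤ h) :
    0 ≤ bernoulliEntropy p h :=
  sub_nonneg.2 <| Real.convexOn_mul_log.map_sum_le (fun ω _ => bernoulliWeight_nonneg hp ω)
    (sum_bernoulliWeight p) fun ω _ => hh ω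

lemma bernoulliEntropy_const (p c : ℝ) : bernoulliEntropy p (const (ι → Bool) c) = 0 := by
  have h := bernoulliExp_const (ι := ι) p (c * Real.log c)
  rw [bernoulliEntropy, bernoulliExp_const]
  exact sub_eq_zero.2 h

lemma dirichletForm_nonneg (hp : p ∈ Set.Icc (0 : ℝ) 1) (g : (ι → Bool) → ℝ) :
    0 ≤ dirichletForm p g :=
  sum_nonneg fun _ _ => bernoulliExp_nonneg hp fun _ => sq_nonneg _

lemma bernoulliExp_coordDeriv_coordRMS_sq_le (hp : p ∈ Set.Icc (0 : ℝ) 1) {i j : ι} (hij : i ≠ j)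
    (g : (ι → Bool) → ℝ) :
    bernoulliExp p (coordDeriv i (coordRMS p j g) ^ 2)
      ≤ bernoulliExp p (coordDeriv i g ^ 2) := by
  rw [← bernoulliExp_coordAvg p j (coordDeriv i g ^ 2)]
  refine bernoulliExp_mono hp fun ω => ?_
  simp only [Pi.pow_apply, coordDeriv, coordRMS, coordAvg, update_comm hij]
  exact sq_sqrt_sub_sqrt_le hp _ _ _ _

lemma dirichletForm_coordRMS_add_le (hp : p ∈ Set.Icc (0 : ℝ) 1) (i : ι) (g : (ι → Bool) → ℝ) :
    dirichletForm p (coordRMS p i g) + bernoulliExp p (coordDeriv i g ^ 2)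
      ≤ dirichletForm p g := by
  have h0 : bernoulliExp p (coordDeriv i (coordRMS p i g) ^ 2) = 0 := by
    rw [coordDeriv_coordRMS_self, zero_pow two_ne_zero]
    exact bernoulliExp_const p 0
  rw [dirichletForm, dirichletForm, ← sum_erase_add _ _ (mem_univ i),
    ← sum_erase_add univ (fun j => bernoulliExp p (coordDeriv j g ^ 2)) (mem_univ i), h0, add_zero]
  gcongr with j hj
  exact bernoulliExp_coordDeriv_coordRMS_sq_le hp (ne_of_mem_erase hj) g

lemma bernoulliEntropy_sq_le_coordRMS_sq_add (hp : p ∈ Set.Icc (0 : ℝ) 1) (i : ι)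
    (g : (ι → Bool) → ℝ) :
    bernoulliEntropy p (g ^ 2)
      ≤ bernoulliEntropy p (coordRMS p i g ^ 2) + bernoulliExp p (coordDeriv i g ^ 2) := by
  have h : bernoulliExp p ((coordAvg p i fun ω => (g ^ 2) ω * Real.log ((g ^ 2) ω))
        - fun ω => coordAvg p i (g ^ 2) ω * Real.log (coordAvg p i (g ^ 2) ω))
      ≤ bernoulliExp p (coordDeriv i g ^ 2) :=
    bernoulliExp_mono hp fun ω => two_point_log_sobolev hp _ _
  rw [bernoulliExp_sub, bernoulliExp_coordAvg] at h
  rw [coordRMS_sq hp, bernoulliEntropy, bernoulliEntropy, bernoulliExp_coordAvg]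
  linarith

theorem bernoulliEntropy_sq_le_dirichletForm (hp : p ∈ Set.Icc (0 : ℝ) 1) (g : (ι → Bool) → ℝ) :
    bernoulliEntropy p (g ^ 2) ≤ dirichletForm p g := by
  suffices ∀ (s : Finset ι) (g : (ι → Bool) → ℝ), DependsOn g s →
      bernoulliEntropy p (g ^ 2) ≤ dirichletForm p g from
    this univ g (by simpa using dependsOn_univ g)
  intro s
  induction s using Finset.induction_on with
  | empty =>
    intro g hg
    have hent : bernoulliEntropy p (g ^ 2) = 0 := by
      rw [eq_const_of_dependsOn_empty (g := g) (by simpa using hg)]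
      exact bernoulliEntropy_const (ι := ι) p ((g fun _ => false) ^ 2)
    exact hent.trans_le (dirichletForm_nonneg hp g)
  | insert i s hi ih =>
    intro g hg
    have hrms : DependsOn (coordRMS p i g) s := by
      simpa only [erase_insert hi] using dependsOn_coordRMS hg p i
    calc bernoulliEntropy p (g ^ 2)
        ≤ bernoulliEntropy p (coordRMS p i g ^ 2) + bernoulliExp p (coordDeriv i g ^ 2) :=
          bernoulliEntropy_sq_le_coordRMS_sq_add hp i g
      _ ≤ dirichletForm p (coordRMS p i g) + bernoulliExp p (coordDeriv i g ^ 2) := by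
          gcongr
          exact ih _ hrms
      _ ≤ dirichletForm p g := dirichletForm_coordRMS_add_le hp i g

end LogSobolev

section FalikSamorodnitsky

variable {ι : Type*} [Fintype ι] [DecidableEq ι] {p v : ℝ}

lemma bernoulliExp_sq_mul_log_le_bernoulliEntropy_sq (hp : p ∈ Set.Icc (0 : ℝ) 1)
    {d : (ι → Bool) → ℝ} (hv : 0 < v) (hd : bernoulliExp p |d| ≤ v) :
    bernoulliExp p (d ^ 2) * Real.log (bernoulliExp p (d ^ 2) / v ^ 2)
      ≤ bernoulliEntropy p (d ^ 2) := by
  have hsq_nonneg : 0 ≤ bernoulliExp p (d ^ 2) := bernoulliExp_nonneg hp fun _ => sq_nonneg _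
  obtain ha | ha := hsq_nonneg.eq_or_lt
  · rw [← ha, zero_mul]
    exact bernoulliEntropy_nonneg hp fun _ => sq_nonneg _
  rw [bernoulliEntropy]
  set a := bernoulliExp p (d ^ 2)
  have hτ : 0 < a / v := div_pos ha hv
  have tangent : (2 * Real.log (a / v) + 2) * a - 2 * (a / v) * bernoulliExp p |d|
      ≤ bernoulliExp p fun ω => (d ^ 2) ω * Real.log ((d ^ 2) ω) := by
    rw [← bernoulliExp_smul, ← bernoulliExp_smul, ← bernoulliExp_sub]
    exact bernoulliExp_mono hp fun ω => sq_mul_log_add_sub_le_sq_mul_log_sq hτ (d ω)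
  have hle : a / v * bernoulliExp p |d| ≤ a :=
    (mul_le_mul_of_nonneg_left hd hτ.le).trans_eq (div_mul_cancel₀ a hv.ne')
  rw [Real.log_div ha.ne' hv.ne'] at tangent
  rw [Real.log_div ha.ne' (pow_ne_zero 2 hv.ne'), Real.log_pow]
  push_cast
  linarith

lemma bernoulliExp_sq_mul_le_dirichletForm_add (hp : p ∈ Set.Icc (0 : ℝ) 1)
    {d : (ι → Bool) → ℝ} {t : ℝ} (ht : 0 < t) (hv : 0 < v) (hd : bernoulliExp p |d| ≤ v) :
    bernoulliExp p (d ^ 2) * (1 + Real.log (t / v ^ 2)) ≤ dirichletForm p d + t := by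
  have hent := (bernoulliExp_sq_mul_log_le_bernoulliEntropy_sq hp hv hd).trans
    (bernoulliEntropy_sq_le_dirichletForm hp d)
  have hsq_nonneg : 0 ≤ bernoulliExp p (d ^ 2) := bernoulliExp_nonneg hp fun _ => sq_nonneg _
  set a := bernoulliExp p (d ^ 2)
  have tangent := mul_log_div_le_sub hsq_nonneg ht
  obtain ha | ha := hsq_nonneg.eq_or_lt
  · rw [← ha] at hent tangent ⊢
    linarith
  have hlog : Real.log (t / v ^ 2) = Real.log (t / a) + Real.log (a / v ^ 2) := by
    rw [← Real.log_mul (div_pos ht ha).ne' (by positivity)]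
    congr 1
    field_simp
  rw [hlog]
  linarith

lemma dirichletForm_sub_coordAvg (p : ℝ) (i : ι) (g : (ι → Bool) → ℝ) :
    dirichletForm p (g - coordAvg p i g)
      = dirichletForm p g - dirichletForm p (coordAvg p i g) := by
  rw [dirichletForm, dirichletForm, dirichletForm, ← sum_sub_distrib]
  refine sum_congr rfl fun j _ => ?_
  rw [coordDeriv_sub]
  obtain rfl | hji := eq_or_ne j i
  · have h0 : bernoulliExp p (0 : (ι → Bool) → ℝ) = 0 := bernoulliExp_const p 0
    rw [coordDeriv_eq_zero (coordAvg_update p j g), sub_zero, zero_pow two_ne_zero, h0, sub_zero]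
  · rw [coordDeriv_coordAvg_of_ne p hji, bernoulliExp_sq_sub_coordAvg]

/-- Unlike the logarithmic bound obtained by optimizing over `t`, this inequality is linear in the
variance, hence can be summed over the increments of the martingale obtained by averaging out one
coordinate after the other. -/
lemma variance_mul_le_dirichletForm_add (hp : p ∈ Set.Icc (0 : ℝ) 1) {t : ℝ} (ht : 0 < t)
    (hv : 0 < v) (s : Finset ι) {g : (ι → Bool) → ℝ} (hg : DependsOn g s)
    (hgv : ∀ i, bernoulliExp p |g - coordAvg p i g| ≤ v) :
    (bernoulliExp p (g ^ 2) - bernoulliExp p g ^ 2) * (1 + Real.log (t / v ^ 2))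
      ≤ dirichletForm p g + #s * t := by
  induction s using Finset.induction_on generalizing g with
  | empty =>
    have hvar : bernoulliExp p (g ^ 2) - bernoulliExp p g ^ 2 = 0 := by
      rw [eq_const_of_dependsOn_empty (g := g) (by simpa using hg), bernoulliExp_const]
      exact sub_eq_zero.2 (bernoulliExp_const p ((g fun _ => false) ^ 2))
    simpa [hvar] using dirichletForm_nonneg hp g
  | insert i s hi ih =>
    have havg : DependsOn (coordAvg p i g) s := by
      simpa only [erase_insert hi] using dependsOn_coordAvg hg p i
    have hrest := ih havg fun j =>
      (bernoulliExp_abs_sub_coordAvg_coordAvg_le hp j i g).trans (hgv j)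
    have hstep := bernoulliExp_sq_mul_le_dirichletForm_add hp ht hv (hgv i)
    rw [bernoulliExp_sq_sub_coordAvg, dirichletForm_sub_coordAvg] at hstep
    rw [bernoulliExp_coordAvg] at hrest
    rw [card_insert_of_notMem hi]
    push_cast
    linarith

theorem variance_mul_log_le_dirichletForm (hp : p ∈ Set.Icc (0 : ℝ) 1) (hv : 0 < v)
    {g : (ι → Bool) → ℝ} (hgv : ∀ i, bernoulliExp p |g - coordAvg p i g| ≤ v)
    (hvar : 0 < bernoulliExp p (g ^ 2) - bernoulliExp p g ^ 2) :
    (bernoulliExp p (g ^ 2) - bernoulliExp p g ^ 2)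
        * Real.log ((bernoulliExp p (g ^ 2) - bernoulliExp p g ^ 2) / (Fintype.card ι * v ^ 2))
      ≤ dirichletForm p g := by
  set V := bernoulliExp p (g ^ 2) - bernoulliExp p g ^ 2
  obtain hι | hι := isEmpty_or_nonempty ι
  · simpa using dirichletForm_nonneg hp g
  have hN : (0 : ℝ) < Fintype.card ι := Nat.cast_pos.2 Fintype.card_pos
  have h := variance_mul_le_dirichletForm_add hp (div_pos hvar hN) hv univ
    (by simpa using dependsOn_univ g) hgv
  rw [card_univ, mul_div_cancel₀ _ hN.ne', div_div] at h
  linarith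

end FalikSamorodnitsky

section Influence

variable {ι : Type*} [DecidableEq ι]

lemma abs_sub_flipCoord (i : ι) (g : (ι → Bool) → ℝ) (ω : ι → Bool) :
    |g ω - g (flipCoord i ω)| = |coordDeriv i g ω| := by
  have h := update_eq_self i ω
  cases hb : ω i <;> rw [hb] at h <;> simp [flipCoord, coordDeriv, hb, h, abs_sub_comm]

lemma coordDeriv_boolInd_sq (i : ι) (f : (ι → Bool) → Bool) :
    coordDeriv i (boolInd f) ^ 2 = |coordDeriv i (boolInd f)| := by
  ext ω
  simp only [Pi.pow_apply, Pi.abs_apply, coordDeriv, boolInd]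
  split_ifs <;> norm_num

lemma IncreasingBoolFun.coordDeriv_boolInd_nonneg {f : (ι → Bool) → Bool}
    (hf : IncreasingBoolFun f) (i : ι) : 0 ≤ coordDeriv i (boolInd f) := fun ω => by
  have hle : update ω i false ≤ update ω i true := update_le_update_iff'.2 (Bool.false_le true)
  have hfle := hf _ _ hle
  rw [Bool.le_iff_imp] at hfle
  simp only [Pi.zero_apply, coordDeriv, boolInd, sub_nonneg]
  split_ifs with h0 h1 <;> simp_all

variable [Fintype ι] {p : ℝ}

lemma influence_eq_bernoulliExp_abs (p : ℝ) (f : (ι → Bool) → Bool) (i : ι) :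
    influence p f i = bernoulliExp p |coordDeriv i (boolInd f)| := by
  simp only [influence, abs_sub_flipCoord]
  rfl

lemma influence_nonneg (hp : p ∈ Set.Icc (0 : ℝ) 1) (f : (ι → Bool) → Bool) (i : ι) :
    0 ≤ influence p f i :=
  bernoulliExp_nonneg hp fun _ => abs_nonneg _

lemma dirichletForm_boolInd (p : ℝ) (f : (ι → Bool) → Bool) :
    dirichletForm p (boolInd f) = ∑ i, influence p f i := by
  simp only [dirichletForm, coordDeriv_boolInd_sq, influence_eq_bernoulliExp_abs]

lemma bernoulliExp_boolInd_sq (p : ℝ) (f : (ι → Bool) → Bool) :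
    bernoulliExp p (boolInd f ^ 2) = bernoulliMean p f := by
  rw [bernoulliMean]
  congr 1
  ext ω
  simp [boolInd]

theorem IncreasingBoolFun.hasDerivAt_bernoulliMean {f : (ι → Bool) → Bool}
    (hf : IncreasingBoolFun f) (p : ℝ) :
    HasDerivAt (fun q => bernoulliMean q f) (∑ i, influence p f i) p := by
  simp only [influence_eq_bernoulliExp_abs, abs_of_nonneg (hf.coordDeriv_boolInd_nonneg _)]
  exact hasDerivAt_bernoulliExp (boolInd f) p

lemma influence_perm_apply {f : (ι → Bool) → Bool} {σ : Equiv.Perm ι}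
    (hσ : ∀ ω, f (ω ∘ σ) = f ω) (p : ℝ) (i : ι) :
    influence p f (σ i) = influence p f i := by
  have hind (ω : ι → Bool) : boolInd f (ω ∘ σ) = boolInd f ω := by rw [boolInd, hσ, boolInd]
  have hflip (ω : ι → Bool) : flipCoord i (ω ∘ σ) = flipCoord (σ i) ω ∘ σ := by
    rw [flipCoord, flipCoord, update_comp_equiv, σ.symm_apply_apply, comp_apply]
  rw [influence, influence,
    ← bernoulliExp_comp_perm p σ fun ω => |boolInd f ω - boolInd f (flipCoord i ω)|]
  simp only [hflip, hind]

lemma log_div_three_le_log {N V : ℝ} (hN : 1 < N) (hV0 : 0 < V) (hV1 : V ≤ 1) :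
    Real.log N / 3 ≤ Real.log (V / (N * (Real.log N / 3 * V / N) ^ 2)) := by
  have hN0 : 0 < N := zero_lt_one.trans hN
  have hL : 0 < Real.log N / 3 := div_pos (Real.log_pos hN) three_pos
  have hquot : V / (N * (Real.log N / 3 * V / N) ^ 2) = N / (V * (Real.log N / 3) ^ 2) := by
    field_simp
  have hlogV : Real.log V ≤ 0 := Real.log_nonpos hV0.le hV1
  have hlogL : Real.log (Real.log N / 3) ≤ Real.log N / 3 - 1 := Real.log_le_sub_one_of_pos hL
  rw [hquot, Real.log_div hN0.ne' (by positivity), Real.log_mul hV0.ne' (by positivity),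
    Real.log_pow]
  push_cast
  linarith

/-- If the bound failed, each influence would be so small that
`variance_mul_log_le_dirichletForm` gives a larger total influence than assumed. -/
theorem log_card_mul_variance_le_sum_influence (hp : p ∈ Set.Icc (0 : ℝ) 1) {f : (ι → Bool) → Bool}
    (hf : ∀ i j, influence p f i = influence p f j) :
    Real.log (Fintype.card ι) / 3 * (bernoulliMean p f * (1 - bernoulliMean p f))
      ≤ ∑ i, influence p f i := by
  obtain ⟨hm0, hm1⟩ := bernoulliMean_mem_Icc hp f
  have hvar : bernoulliExp p (boolInd f ^ 2) - bernoulliExp p (boolInd f) ^ 2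
      = bernoulliMean p f * (1 - bernoulliMean p f) := by
    rw [bernoulliExp_boolInd_sq, ← bernoulliMean]
    ring
  have hV0 : 0 ≤ bernoulliMean p f * (1 - bernoulliMean p f) :=
    mul_nonneg hm0 (sub_nonneg.2 hm1)
  have hV1 : bernoulliMean p f * (1 - bernoulliMean p f) ≤ 1 := by nlinarith
  set V := bernoulliMean p f * (1 - bernoulliMean p f)
  set N : ℝ := (Fintype.card ι : ℝ)
  by_contra! hlt
  have hLV : 0 < Real.log N / 3 * V :=
    (sum_nonneg fun i _ => influence_nonneg hp f i).trans_lt hlt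
  have hVpos : 0 < V := hV0.lt_of_ne fun h => by simp [← h] at hLV
  have hN : 1 < N := by
    have hlogN : 0 < Real.log N / 3 := pos_of_mul_pos_left hLV hV0
    exact (Real.log_pos_iff (Nat.cast_nonneg _)).1 (by linarith)
  have hN0 : 0 < N := zero_lt_one.trans hN
  have hv (i : ι) :
      bernoulliExp p |boolInd f - coordAvg p i (boolInd f)| ≤ Real.log N / 3 * V / N := by
    have hsum : ∑ j, influence p f j = N * influence p f i := by
      rw [sum_congr rfl fun j _ => hf j i, sum_const, card_univ, nsmul_eq_mul]
    refine (bernoulliExp_mono hp (abs_sub_coordAvg_le hp i _)).trans ?_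
    rw [← influence_eq_bernoulliExp_abs, le_div_iff₀' hN0, ← hsum]
    exact hlt.le
  have henergy := variance_mul_log_le_dirichletForm hp (div_pos hLV hN0) hv (hvar.symm ▸ hVpos)
  rw [hvar, dirichletForm_boolInd] at henergy
  linarith [mul_le_mul_of_nonneg_left (log_div_three_le_log hN hVpos hV1) hV0]

end Influence

section LogisticGrowth

variable {y y' : ℝ → ℝ} {K a b : ℝ}

lemma mul_sub_le_logit_sub_logit (hab : a ≤ b) (hy : ∀ t ∈ Set.Icc a b, y t ∈ Set.Ioo (0 : ℝ) 1)
    (hderiv : ∀ t ∈ Set.Icc a b, HasDerivAt y (y' t) t)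
    (hle : ∀ t ∈ Set.Icc a b, K * (y t * (1 - y t)) ≤ y' t) :
    K * (b - a) ≤ Real.log (y b / (1 - y b)) - Real.log (y a / (1 - y a)) := by
  have hlogit : ∀ t ∈ Set.Icc a b,
      HasDerivAt (fun s => Real.log (y s / (1 - y s))) (y' t / (y t * (1 - y t))) t := by
    intro t ht
    have h0 : y t ≠ 0 := (hy t ht).1.ne'
    have h1 : 1 - y t ≠ 0 := (sub_pos.2 (hy t ht).2).ne'
    refine (((hderiv t ht).fun_div ((hderiv t ht).const_sub 1) h1).log
      (div_ne_zero h0 h1)).congr_deriv ?_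
    field_simp
    ring
  refine (convex_Icc a b).mul_sub_le_image_sub_of_le_deriv
    (fun t ht => (hlogit t ht).continuousAt.continuousWithinAt)
    (fun t ht => (hlogit t (interior_subset ht)).differentiableAt.differentiableWithinAt)
    (fun t ht => ?_) a (Set.left_mem_Icc.2 hab) b (Set.right_mem_Icc.2 hab) hab
  have ht := interior_subset ht
  have hpos : 0 < y t * (1 - y t) := mul_pos (hy t ht).1 (sub_pos.2 (hy t ht).2)
  rw [(hlogit t ht).deriv, le_div_iff₀ hpos]
  exact hle t ht

theorem exp_mul_odds_le (hK : 0 ≤ K) (hab : a ≤ b)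
    (hy : ∀ t ∈ Set.Icc a b, y t ∈ Set.Icc (0 : ℝ) 1)
    (hderiv : ∀ t ∈ Set.Icc a b, HasDerivAt y (y' t) t)
    (hle : ∀ t ∈ Set.Icc a b, K * (y t * (1 - y t)) ≤ y' t) :
    Real.exp (K * (b - a)) * (y a * (1 - y b)) ≤ y b * (1 - y a) := by
  have ha : a ∈ Set.Icc a b := Set.left_mem_Icc.2 hab
  have hb : b ∈ Set.Icc a b := Set.right_mem_Icc.2 hab
  have hrhs : 0 ≤ y b * (1 - y a) := mul_nonneg (hy b hb).1 (sub_nonneg.2 (hy a ha).2)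
  obtain ha0 | ha0 := (hy a ha).1.eq_or_lt
  · simpa [← ha0] using hrhs
  obtain hb1 | hb1 := (hy b hb).2.eq_or_lt
  · simpa [hb1] using hrhs
  have hmono : MonotoneOn y (Set.Icc a b) :=
    monotoneOn_of_deriv_nonneg (convex_Icc a b)
      (fun t ht => (hderiv t ht).continuousAt.continuousWithinAt)
      (fun t ht => (hderiv t (interior_subset ht)).differentiableAt.differentiableWithinAt)
      fun t ht => by
        have ht := interior_subset ht
        rw [(hderiv t ht).deriv]
        exact (mul_nonneg hK (mul_nonneg (hy t ht).1 (sub_nonneg.2 (hy t ht).2))).trans (hle t ht)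
  have hy' : ∀ t ∈ Set.Icc a b, y t ∈ Set.Ioo (0 : ℝ) 1 := fun t ht =>
    ⟨ha0.trans_le (hmono ha ht ht.1), (hmono ht hb ht.2).trans_lt hb1⟩
  have ha1 : 0 < 1 - y a := sub_pos.2 (hy' a ha).2
  have hb0 : 0 < 1 - y b := sub_pos.2 hb1
  have hodds_a : 0 < y a / (1 - y a) := div_pos ha0 ha1
  have hodds_b : 0 < y b / (1 - y b) := div_pos (hy' b hb).1 hb0
  have h := mul_sub_le_logit_sub_logit hab hy' hderiv hle
  rw [← Real.log_div hodds_b.ne' hodds_a.ne', Real.le_log_iff_exp_le (by positivity),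
    div_div_div_eq, le_div_iff₀ (by positivity)] at h
  linarith

end LogisticGrowth

section SharpThreshold

variable {ι : Type*}

/-- The boolean functions invariant under a group of permutations acting transitively on the
coordinates, the class in which all influences are equal. -/
def IsTransitivelySymmetric (f : (ι → Bool) → Bool) : Prop :=
  ∀ i j, ∃ σ : Equiv.Perm ι, σ i = j ∧ ∀ ω, f (ω ∘ σ) = f ω

variable [Fintype ι] [DecidableEq ι] {f : (ι → Bool) → Bool}

lemma IsTransitivelySymmetric.influence_eq (hf : IsTransitivelySymmetric f) (p : ℝ) (i j : ι) :
    influence p f i = influence p f j := by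
  obtain ⟨σ, rfl, hσ⟩ := hf i j
  exact (influence_perm_apply hσ p i).symm

lemma exp_log_card_mul_odds_le (hinc : IncreasingBoolFun f) (hsymm : IsTransitivelySymmetric f)
    {a b : ℝ} (ha : 0 ≤ a) (hab : a ≤ b) (hb : b ≤ 1) :
    Real.exp (Real.log (Fintype.card ι) / 3 * (b - a))
        * (bernoulliMean a f * (1 - bernoulliMean b f))
      ≤ bernoulliMean b f * (1 - bernoulliMean a f) := by
  have hsub {t : ℝ} (ht : t ∈ Set.Icc a b) : t ∈ Set.Icc (0 : ℝ) 1 :=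
    ⟨ha.trans ht.1, ht.2.trans hb⟩
  exact exp_mul_odds_le (div_nonneg (Real.log_natCast_nonneg _) zero_le_three) hab
    (fun t ht => bernoulliMean_mem_Icc (hsub ht) f)
    (fun t _ => hinc.hasDerivAt_bernoulliMean t)
    fun t ht => log_card_mul_variance_le_sum_influence (hsub ht) (hsymm.influence_eq t)

theorem monotone_graph_property_sharp_threshold_general (hinc : IncreasingBoolFun f)
    (hsymm : IsTransitivelySymmetric f) {p : ℝ} (hp : p ∈ Set.Icc (0 : ℝ) 1)
    (hmean : bernoulliMean p f = 1 / 2) {ε : ℝ} (hε : ε ∈ Set.Ioo (0 : ℝ) 1) {δ : ℝ}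
    (hδ : Real.log (1 / ε) ≤ Real.log (Fintype.card ι) / 3 * δ) :
    (0 ≤ p - δ → bernoulliMean (p - δ) f ≤ ε) ∧
      (p + δ ≤ 1 → 1 - ε ≤ bernoulliMean (p + δ) f) := by
  have hδ0 : 0 < δ := by
    have hpos : 0 < Real.log (Fintype.card ι) / 3 * δ :=
      (Real.log_pos (one_lt_one_div hε.1 hε.2)).trans_le hδ
    exact pos_of_mul_pos_right hpos (div_nonneg (Real.log_natCast_nonneg _) zero_le_three)
  have le_of_exp_mul_le_one {x : ℝ} (hx : Real.exp (Real.log (Fintype.card ι) / 3 * δ) * x ≤ 1) :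
      x ≤ ε := by
    have one_le : 1 ≤ Real.exp (Real.log (Fintype.card ι) / 3 * δ) * ε := by
      rwa [← div_le_iff₀ hε.1, ← Real.log_le_iff_le_exp (one_div_pos.2 hε.1)]
    exact le_of_mul_le_mul_left (hx.trans one_le) (Real.exp_pos _)
  constructor <;> intro hpδ
  · have h := exp_log_card_mul_odds_le hinc hsymm hpδ (sub_le_self p hδ0.le) hp.2
    rw [hmean, sub_sub_cancel] at h
    have hm := bernoulliMean_mem_Icc ⟨hpδ, (sub_le_self p hδ0.le).trans hp.2⟩ f
    exact le_of_exp_mul_le_one (by linarith [hm.1])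
  · have h := exp_log_card_mul_odds_le hinc hsymm hp.1 (le_add_of_nonneg_right hδ0.le) hpδ
    rw [hmean, add_sub_cancel_left] at h
    have hm := bernoulliMean_mem_Icc ⟨add_nonneg hp.1 hδ0.le, hpδ⟩ f
    exact sub_le_comm.1 (le_of_exp_mul_le_one (by linarith [hm.2]))

end SharpThreshold

section GraphProperty

variable {n : ℕ}

lemma permEdge_injective (σ : Equiv.Perm (Fin n)) : Injective (permEdge σ) := fun _ _ h =>
  Subtype.ext (Sym2.map.injective σ.injective (congrArg Subtype.val h))

lemma exists_permEdge_eq (e e' : KEdge n) : ∃ σ : Equiv.Perm (Fin n), permEdge σ e = e' := by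
  obtain ⟨⟨a, b⟩, hab⟩ := e
  obtain ⟨⟨c, d⟩, hcd⟩ := e'
  obtain ⟨σ, hac, hbd⟩ := MulAction.is_two_pretransitive_iff.mp
    (Equiv.Perm.isMultiplyPretransitive (Fin n) 2) hab hcd
  exact ⟨σ, Subtype.ext (congrArg₂ (fun u v => s(u, v)) hac hbd)⟩

lemma IsGraphProperty.isTransitivelySymmetric {f : (KEdge n → Bool) → Bool}
    (hf : IsGraphProperty f) : IsTransitivelySymmetric f := fun e e' => by
  obtain ⟨σ, hσ⟩ := exists_permEdge_eq e e'
  exact ⟨Equiv.ofBijective (permEdge σ) (Finite.injective_iff_bijective.mp (permEdge_injective σ)),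
    hσ, hf σ⟩

lemma card_KEdge (n : ℕ) : Fintype.card (KEdge n) = n.choose 2 := by
  have h := Sym2.card_subtype_not_diag (α := Fin n)
  rw [Fintype.card_fin] at h
  rw [← h]
  exact Fintype.card_congr (Equiv.refl _)

lemma le_card_KEdge (hn : 3 ≤ n) : n ≤ Fintype.card (KEdge n) := by
  rw [card_KEdge, Nat.choose_two_right, Nat.le_div_iff_mul_le two_pos]
  exact Nat.mul_le_mul_left n (Nat.le_sub_one_of_lt hn)

end GraphProperty

/-- **Sharp thresholds for monotone graph properties.**  There is a universal `c > 0`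
such that for every `n ≥ 3`, every increasing non-constant graph property `f` on graphs
with `n` vertices, and every `p ∈ (0,1)` with `𝔼_p[f] = 1/2`: for all `ε ∈ (0,1/2)` and
all `δ ≥ log(1/ε)/(c log n)`, one has `𝔼_{p−δ}[f] ≤ ε` (if `p − δ ≥ 0`) and
`𝔼_{p+δ}[f] ≥ 1 − ε` (if `p + δ ≤ 1`). -/
theorem monotone_graph_property_sharp_threshold :
    ∃ c : ℝ, 0 < c ∧ ∀ (n : ℕ), 3 ≤ n → ∀ f : (KEdge n → Bool) → Bool,
      IncreasingBoolFun f → IsGraphProperty f →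
      (∃ ω ω' : KEdge n → Bool, f ω ≠ f ω') →
      ∀ p : ℝ, p ∈ Set.Ioo (0 : ℝ) 1 → bernoulliMean p f = 1 / 2 →
      ∀ ε : ℝ, ε ∈ Set.Ioo (0 : ℝ) (1 / 2) →
      ∀ δ : ℝ, Real.log (1 / ε) / (c * Real.log n) ≤ δ →
        (0 ≤ p - δ → bernoulliMean (p - δ) f ≤ ε) ∧
        (p + δ ≤ 1 → 1 - ε ≤ bernoulliMean (p + δ) f) := by
  refine ⟨1 / 3, by norm_num, fun n hn f hinc hgraph _ p hp hmean ε hε δ hδ => ?_⟩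
  refine monotone_graph_property_sharp_threshold_general hinc hgraph.isTransitivelySymmetric
    (Set.Ioo_subset_Icc_self hp) hmean ⟨hε.1, by linarith [hε.2]⟩ ?_
  have hlog : 0 < Real.log n := Real.log_pos (by exact_mod_cast (by omega : 1 < n))
  have hcard : Real.log n ≤ Real.log (Fintype.card (KEdge n)) :=
    Real.log_le_log (by positivity) (by exact_mod_cast le_card_KEdge hn)
  have hδ0 : 0 ≤ δ := (div_nonneg (Real.log_nonneg (one_le_one_div hε.1 (by linarith [hε.2])))
    (by positivity)).trans hδ
  calc Real.log (1 / ε) ≤ δ * (1 / 3 * Real.log n) := (div_le_iff₀ (by positivity)).1 hδ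
    _ = Real.log n / 3 * δ := by ring
    _ ≤ Real.log (Fintype.card (KEdge n)) / 3 * δ := by gcongr
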